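/- For any n complex alternating n×n matrices A_1, …, A_n (A_iᵀ = −A_i) and any n−1 complex symmetric n×n matrices B_1, …, B_{n−1} (B_jᵀ = B_j), the double alternating sum Σ_{σ ∈ S_n} Σ_{τ ∈ S_{n−1}} sgn(σ) sgn(τ) · A_{σ(1)} B_{τ(1)} A_{σ(2)} B_{τ(2)} ⋯ A_{σ(n−1)} B_{τ(n−1)} A_{σ(n)} equals the zero matrix, where the product is the ordered matrix product. -/

import Mathlib

open Matrix

/-!
Let `e_0, …, e_m, f_1, …, f_m` be the generators of an exterior algebra, and put `A = ∑ e_i A_i` and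
`B = ∑ f_j B_j`. Expanding `(A B)^m A` gives, up to sign, the double alternating sum times the
product of all the generators, so it suffices to show `(A B)^m A = 0`.

The entries of `M = A B` are even, hence central, and `Mᵀ = B A`. Since the entries of `A` and `B`
anticommute, `tr (A B)^k = - tr (B A)^k`, so every positive power of `M` has trace zero. In the
absence of torsion the characteristic polynomial of the `n × n` matrix `M` is therefore `X^n`, and
`adj (X - M) = ∑ X^i M^(n-1-i)`. The `2 × 2` minors of this adjugate are divisible by
`det (X - M) = X^n`. In degree `n - 1` this says that `∑_{p+q=n-1} M^p ⊗ M^q` does not change when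
two column indices are exchanged, so contracting it with the alternating matrix `A` gives
`∑_{p+q=n-1} M^p A (Mᵀ)^q = 0`. Finally `M A = A Mᵀ`, so all `n` summands equal `(A B)^(n-1) A`.
-/

theorem trace_mapMatrix {R S ι : Type*} [NonAssocSemiring R] [NonAssocSemiring S] [Fintype ι]
    [DecidableEq ι] (f : R →+* S) (M : Matrix ι ι R) : (f.mapMatrix M).trace = f M.trace :=
  (AddMonoidHom.map_trace f M).symm

section Charpoly

open Polynomial Finset.HasAntidiagonal

variable {R ι : Type*} [CommRing R] [Fintype ι] [DecidableEq ι]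

theorem derivative_det_eq_sum_det_updateCol (N : Matrix ι ι R[X]) :
    derivative N.det = ∑ i, (N.updateCol i fun k => derivative (N k i)).det := by
  simp only [det_apply', derivative_sum]
  rw [Finset.sum_comm]
  refine Finset.sum_congr rfl fun σ _ => ?_
  rw [← Finset.mul_sum, derivative_mul, derivative_intCast, zero_mul, zero_add,
    derivative_prod_finset]
  congr 1
  refine Finset.sum_congr rfl fun i _ => ?_
  rw [← Finset.prod_erase_mul _ _ (Finset.mem_univ i), updateCol_self]
  congr 1
  refine Finset.prod_congr rfl fun j hj => ?_
  rw [updateCol_ne (Finset.ne_of_mem_erase hj)]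

theorem derivative_charpoly_eq_trace_adjugate_charmatrix (M : Matrix ι ι R) :
    derivative M.charpoly = (adjugate M.charmatrix).trace := by
  rw [charpoly, derivative_det_eq_sum_det_updateCol, trace]
  refine Finset.sum_congr rfl fun i _ => ?_
  have hcol : (fun k => derivative (M.charmatrix k i)) = Pi.single i 1 := by
    ext1 k
    rcases eq_or_ne k i with rfl | hk
    · simp
    · simp [hk]
  rw [hcol, diag_apply, ← transpose_apply (adjugate _), adjugate_transpose, adjugate_def,
    of_apply, transpose_transpose, cramer_apply]

theorem X_smul_adjugate_charmatrix (M : Matrix ι ι R) :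
    (X : R[X]) • adjugate M.charmatrix =
      C.mapMatrix M * adjugate M.charmatrix + M.charpoly • (1 : Matrix ι ι R[X]) := by
  rw [charpoly, ← mul_adjugate M.charmatrix, ← add_mul, charmatrix, add_sub_cancel, scalar_apply,
    ← smul_eq_diagonal_mul]

theorem mul_trace_mul_adjugate_charmatrix (M : Matrix ι ι R)
    (hM : ∀ k, (M ^ (k + 1)).trace = 0) (p : R[X]) :
    p * (C.mapMatrix M * adjugate M.charmatrix).trace =
      (C.mapMatrix (aeval M p * M) * adjugate M.charmatrix).trace := by
  induction p using Polynomial.induction_on with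
  | C a =>
    rw [aeval_C, ← Algebra.smul_def, ← smul_eq_mul, ← trace_smul, ← Matrix.smul_mul]
    congr 2
    ext1 i j
    simp
  | add p q hp hq => rw [add_mul, hp, hq, map_add, add_mul, map_add, add_mul, trace_add]
  | monomial n a ih =>
    have htrace : (C.mapMatrix (aeval M (C a * X ^ n) * M)).trace = 0 := by
      rw [trace_mapMatrix, map_mul, aeval_C, map_pow, aeval_X, mul_assoc, ← pow_succ,
        ← Algebra.smul_def, trace_smul, hM, smul_zero, map_zero]
    calc C a * X ^ (n + 1) * (C.mapMatrix M * adjugate M.charmatrix).trace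
        = X * (C a * X ^ n * (C.mapMatrix M * adjugate M.charmatrix).trace) := by ring
      _ = (C.mapMatrix (aeval M (C a * X ^ n) * M) * (X : R[X]) • adjugate M.charmatrix).trace := by
        rw [ih, Matrix.mul_smul, trace_smul, smul_eq_mul]
      _ = (C.mapMatrix (aeval M (C a * X ^ (n + 1)) * M) * adjugate M.charmatrix).trace := by
        rw [X_smul_adjugate_charmatrix, mul_add, trace_add, Matrix.mul_smul, mul_one, trace_smul,
          htrace, smul_zero, add_zero, ← mul_assoc, ← map_mul, pow_succ, ← mul_assoc,
          map_mul (aeval M) _ X, aeval_X]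

theorem trace_mul_adjugate_charmatrix_eq_zero (M : Matrix ι ι R)
    (hM : ∀ k, (M ^ (k + 1)).trace = 0) :
    (C.mapMatrix M * adjugate M.charmatrix).trace = 0 := by
  have h := mul_trace_mul_adjugate_charmatrix M hM M.charpoly
  rw [aeval_self_charpoly, zero_mul, map_zero, zero_mul, trace_zero] at h
  exact M.charpoly_monic.mul_right_eq_zero_iff.1 h

theorem eq_X_pow_of_X_mul_derivative_eq [IsAddTorsionFree R] {p : R[X]} (hp : p.Monic)
    (h : X * derivative p = p.natDegree • p) : p = X ^ p.natDegree := by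
  have hcoeff (k : ℕ) : k • p.coeff k = p.natDegree • p.coeff k := by
    rw [← coeff_smul p.natDegree, ← h]
    cases k with
    | zero => simp
    | succ k => rw [coeff_X_mul, coeff_derivative, nsmul_eq_mul, mul_comm, Nat.cast_succ]
  ext k
  rw [coeff_X_pow]
  split_ifs with hk
  · rw [hk, hp.coeff_natDegree]
  · by_contra hne
    have hzero : ((k : ℤ) - p.natDegree) • p.coeff k = 0 := by
      rw [sub_smul, natCast_zsmul, natCast_zsmul, hcoeff, sub_self]
    have := (IsAddTorsionFree.zsmul_eq_zero_iff_left hne).1 hzero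
    omega

theorem charpoly_eq_X_pow_of_trace_pow_eq_zero [IsAddTorsionFree R] (M : Matrix ι ι R)
    (hM : ∀ k, (M ^ (k + 1)).trace = 0) : M.charpoly = X ^ Fintype.card ι := by
  nontriviality R
  have h : X * derivative M.charpoly = M.charpoly.natDegree • M.charpoly := by
    rw [derivative_charpoly_eq_trace_adjugate_charmatrix, ← smul_eq_mul, ← trace_smul,
      X_smul_adjugate_charmatrix, trace_add, trace_mul_adjugate_charmatrix_eq_zero M hM, zero_add,
      trace_smul, trace_one, charpoly_natDegree_eq_dim, smul_eq_mul, nsmul_eq_mul, mul_comm]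
  rw [eq_X_pow_of_X_mul_derivative_eq M.charpoly_monic h, charpoly_natDegree_eq_dim]

theorem det_updateCol_updateCol_one {a b : ι} (hab : a ≠ b) (u v : ι → R) :
    (((1 : Matrix ι ι R).updateCol a u).updateCol b v).det = u a * v b - v a * u b := by
  let U : Matrix ι (Fin 2) R := of fun k =>
    ![u k - (1 : Matrix ι ι R) k a, v k - (1 : Matrix ι ι R) k b]
  let V : Matrix (Fin 2) ι R := of ![Pi.single a 1, Pi.single b 1]
  have hUV : ((1 : Matrix ι ι R).updateCol a u).updateCol b v = 1 + U * V := by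
    ext k l
    rcases eq_or_ne l b with rfl | hb
    · simp [U, V, mul_apply, hab.symm]
    · rcases eq_or_ne l a with rfl | ha
      · simp [U, V, mul_apply, hab]
      · simp [U, V, mul_apply, ha, hb]
  rw [hUV, det_one_add_mul_comm, det_fin_two]
  simp [U, V, hab, hab.symm, one_apply]

theorem det_dvd_adjugate_mul_sub_mul {N : Matrix ι ι R} (hN : IsRegular N.det) (a b i j : ι) :
    N.det ∣ adjugate N a i * adjugate N b j - adjugate N a j * adjugate N b i := by
  rcases eq_or_ne a b with rfl | hab
  · exact ⟨0, by ring⟩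
  -- `det P` is the minor in question, while two columns of `N * P` are multiples of `N.det`.
  let P := ((1 : Matrix ι ι R).updateCol a ((adjugate N).col i)).updateCol b ((adjugate N).col j)
  have hcol (l : ι) : N *ᵥ (adjugate N).col l = N.det • Pi.single l 1 := by
    rw [← mulVec_single_one, mulVec_mulVec, mul_adjugate, smul_mulVec, one_mulVec]
  have hNP : N * P =
      (N.updateCol a (N.det • Pi.single i 1)).updateCol b (N.det • Pi.single j 1) := by
    rw [mul_updateCol, mul_updateCol, mul_one, hcol, hcol]
  have hdet := congrArg det hNP
  rw [det_mul, det_updateCol_updateCol_one hab, det_updateCol_smul, updateCol_comm _ hab,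
    det_updateCol_smul] at hdet
  exact ⟨_, hN.left hdet⟩

theorem eq_adjugate_of_mul_eq_det_smul_one {N G : Matrix ι ι R} (hN : IsRegular N.det)
    (h : N * G = N.det • 1) : G = adjugate N := by
  have hdet : N.det • G = N.det • adjugate N := by
    rw [← one_mul G, ← Matrix.smul_mul, ← adjugate_mul, mul_assoc, h, Matrix.mul_smul, mul_one]
  ext i j
  exact hN.left (congrFun₂ hdet i j)

theorem adjugate_charmatrix_of_charpoly_eq_X_pow {M : Matrix ι ι R}
    (hM : M.charpoly = X ^ Fintype.card ι) :
    adjugate M.charmatrix = ∑ i ∈ Finset.range (Fintype.card ι),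
      (X : R[X]) ^ i • C.mapMatrix (M ^ (Fintype.card ι - 1 - i)) := by
  have hnil : M ^ Fintype.card ι = 0 := by
    simpa [hM] using aeval_self_charpoly M
  symm
  refine eq_adjugate_of_mul_eq_det_smul_one M.charpoly_monic.isRegular ?_
  have hgeom := (scalar_commute (X : R[X]) (Commute.all _) (C.mapMatrix M)).mul_geom_sum₂
    (Fintype.card ι)
  rw [← map_pow _ M, hnil, map_zero, sub_zero, ← charmatrix] at hgeom
  rw [← charpoly, hM, smul_one_eq_diagonal, ← scalar_apply, map_pow, ← hgeom]
  refine congrArg _ (Finset.sum_congr rfl fun i _ => ?_)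
  rw [← map_pow, ← map_pow, scalar_apply, smul_eq_diagonal_mul]

theorem coeff_adjugate_charmatrix_of_charpoly_eq_X_pow {M : Matrix ι ι R}
    (hM : M.charpoly = X ^ Fintype.card ι) (a b : ι) {k : ℕ} (hk : k < Fintype.card ι) :
    (adjugate M.charmatrix a b).coeff k = (M ^ (Fintype.card ι - 1 - k)) a b := by
  rw [adjugate_charmatrix_of_charpoly_eq_X_pow hM, Matrix.sum_apply, finsetSum_coeff,
    Finset.sum_eq_single_of_mem k (Finset.mem_range.2 hk)]
  · simp
  · intro l _ hl
    rw [Matrix.smul_apply, RingHom.mapMatrix_apply, map_apply, smul_eq_mul, coeff_X_pow_mul',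
      coeff_C, ite_eq_right_iff]
    exact fun hle => if_neg (by omega)

theorem sum_antidiagonal_pow_mul_pow_swap {M : Matrix ι ι R}
    (hM : M.charpoly = X ^ Fintype.card ι) (a b i j : ι) :
    ∑ p ∈ antidiagonal (Fintype.card ι - 1), (M ^ p.1) a i * (M ^ p.2) b j =
      ∑ p ∈ antidiagonal (Fintype.card ι - 1), (M ^ p.1) a j * (M ^ p.2) b i := by
  have hcard : 0 < Fintype.card ι := Fintype.card_pos_iff.2 ⟨a⟩
  have hcoeff (i j : ι) :
      (adjugate M.charmatrix a i * adjugate M.charmatrix b j).coeff (Fintype.card ι - 1) =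
        ∑ p ∈ antidiagonal (Fintype.card ι - 1), (M ^ p.1) a i * (M ^ p.2) b j := by
    rw [coeff_mul, ← Finset.Nat.sum_antidiagonal_swap]
    refine Finset.sum_congr rfl fun p hp => ?_
    have hp := mem_antidiagonal.1 hp
    rw [Prod.fst_swap, Prod.snd_swap, coeff_adjugate_charmatrix_of_charpoly_eq_X_pow hM _ _
      (by omega), coeff_adjugate_charmatrix_of_charpoly_eq_X_pow hM _ _ (by omega), ← hp,
      Nat.add_sub_cancel, Nat.add_sub_cancel_left]
  have hdvd := det_dvd_adjugate_mul_sub_mul M.charpoly_monic.isRegular a b i j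
  rw [← charpoly, hM, X_pow_dvd_iff] at hdvd
  have hzero := hdvd (Fintype.card ι - 1) (by omega)
  rwa [coeff_sub, hcoeff, hcoeff, sub_eq_zero] at hzero

end Charpoly

section AnticommutingEntries

variable {E l m n : Type*} [NonUnitalNonAssocRing E] [Fintype m]

theorem transpose_mul_of_anticommute {A : Matrix l m E} {B : Matrix m n E}
    (h : ∀ i j k, A i j * B j k = -(B j k * A i j)) : (A * B)ᵀ = -(Bᵀ * Aᵀ) := by
  ext i k
  simp only [transpose_apply, Matrix.neg_apply, mul_apply, h, Finset.sum_neg_distrib]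

theorem trace_mul_of_anticommute [Fintype l] {A : Matrix l m E} {B : Matrix m l E}
    (h : ∀ i j, A i j * B j i = -(B j i * A i j)) : (A * B).trace = -(B * A).trace := by
  simp only [trace, diag_apply, mul_apply, h, Finset.sum_neg_distrib]
  rw [Finset.sum_comm]

end AnticommutingEntries

section CentralProducts

open Finset.HasAntidiagonal

variable {R E ι : Type*} [CommRing R] [Ring E] [Algebra R E] [Fintype ι] [DecidableEq ι]

theorem sum_mul_mul_transpose_eq_zero [IsAddTorsionFree E] {κ : Type*} (s : Finset κ)
    (P Q : κ → Matrix ι ι R) {A : Matrix ι ι E} (hA : Aᵀ = -A)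
    (hPQ : ∀ a b i j, ∑ p ∈ s, P p a i * Q p b j = ∑ p ∈ s, P p a j * Q p b i) :
    ∑ p ∈ s, (algebraMap R E).mapMatrix (P p) * A * (algebraMap R E).mapMatrix (Q p)ᵀ = 0 := by
  ext1 a b
  have hsum : (∑ p ∈ s, (algebraMap R E).mapMatrix (P p) * A *
      (algebraMap R E).mapMatrix (Q p)ᵀ) a b =
        ∑ j, ∑ i, (∑ p ∈ s, P p a i * Q p b j) • A i j := by
    simp only [Matrix.sum_apply, mul_apply, Finset.sum_mul, Finset.sum_smul]
    rw [Finset.sum_comm]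
    refine Finset.sum_congr rfl fun j _ => ?_
    rw [Finset.sum_comm]
    refine Finset.sum_congr rfl fun i _ => Finset.sum_congr rfl fun p _ => ?_
    rw [RingHom.mapMatrix_apply, RingHom.mapMatrix_apply, map_apply, map_apply, transpose_apply,
      ← Algebra.commutes, ← Algebra.smul_def, ← Algebra.smul_def, smul_smul, mul_comm]
  rw [hsum, Matrix.zero_apply, ← self_eq_neg]
  conv_lhs => rw [Finset.sum_comm]
  rw [← Finset.sum_neg_distrib]
  refine Finset.sum_congr rfl fun i _ => ?_
  rw [← Finset.sum_neg_distrib]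
  refine Finset.sum_congr rfl fun j _ => ?_
  rw [hPQ, ← smul_neg, show A i j = -A j i from congrFun₂ hA j i]

theorem trace_pow_succ_eq_zero_of_anticommute [IsAddTorsionFree R] [FaithfulSMul R E]
    {A B : Matrix ι ι E} {M : Matrix ι ι R} (hM : (algebraMap R E).mapMatrix M = A * B)
    (hMt : (algebraMap R E).mapMatrix Mᵀ = B * A)
    (hAB : ∀ i j k l, A i j * B k l = -(B k l * A i j)) (k : ℕ) : (M ^ (k + 1)).trace = 0 := by
  have hanti (i j : ι) :
      A i j * (B * (A * B) ^ k) j i = -((B * (A * B) ^ k) j i * A i j) := by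
    rw [← hM, ← map_pow, mul_apply, Finset.mul_sum, Finset.sum_mul, ← Finset.sum_neg_distrib]
    refine Finset.sum_congr rfl fun l _ => ?_
    rw [RingHom.mapMatrix_apply, map_apply, mul_assoc, Algebra.commutes, ← mul_assoc, hAB,
      neg_mul, mul_assoc]
  have htrace : ((A * B) ^ (k + 1)).trace = -((B * A) ^ (k + 1)).trace := by
    rw [pow_succ', mul_assoc, trace_mul_of_anticommute hanti, mul_assoc, mul_pow_mul, ← mul_assoc,
      ← pow_succ']
  rw [← self_eq_neg]
  apply FaithfulSMul.algebraMap_injective R E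
  conv_rhs => rw [← trace_transpose, transpose_pow]
  rw [map_neg, ← trace_mapMatrix, ← trace_mapMatrix, map_pow, map_pow, hM, hMt, htrace]

theorem pow_card_sub_one_mul_eq_zero_of_anticommute [IsAddTorsionFree E] {A B : Matrix ι ι E}
    (hA : Aᵀ = -A) (hB : Bᵀ = B) (hAB : ∀ i j k l, A i j * B k l = -(B k l * A i j))
    (hcenter : ∀ i j, (A * B) i j ∈ Subring.center E) :
    (A * B) ^ (Fintype.card ι - 1) * A = 0 := by
  let Z := Subring.center E
  have : IsAddTorsionFree Z :=
    Function.Injective.isAddTorsionFree Z.subtype.toAddMonoidHom Subtype.val_injective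
  let M : Matrix ι ι Z := of fun i j => ⟨(A * B) i j, hcenter i j⟩
  have hM : (algebraMap Z E).mapMatrix M = A * B := rfl
  have hMt : (algebraMap Z E).mapMatrix Mᵀ = B * A := by
    change (A * B)ᵀ = B * A
    rw [transpose_mul_of_anticommute fun i j k => hAB i j j k, hA, hB, mul_neg, neg_neg]
  have hcharpoly := charpoly_eq_X_pow_of_trace_pow_eq_zero M
    (trace_pow_succ_eq_zero_of_anticommute hM hMt hAB)
  have hsum := sum_mul_mul_transpose_eq_zero (antidiagonal (Fintype.card ι - 1))
    (fun p => M ^ p.1) (fun p => M ^ p.2) hA (sum_antidiagonal_pow_mul_pow_swap hcharpoly)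
  have hterm : ∀ p ∈ antidiagonal (Fintype.card ι - 1),
      (algebraMap Z E).mapMatrix (M ^ p.1) * A * (algebraMap Z E).mapMatrix (M ^ p.2)ᵀ =
        (A * B) ^ (Fintype.card ι - 1) * A := by
    intro p hp
    rw [transpose_pow, map_pow, map_pow, hM, hMt, mul_assoc, ← mul_pow_mul, ← mul_assoc,
      ← pow_add, mem_antidiagonal.1 hp]
  rw [Finset.sum_congr rfl hterm, Finset.sum_const, Finset.Nat.card_antidiagonal] at hsum
  ext1 i j
  exact (nsmul_eq_zero_iff_right (Nat.succ_ne_zero _)).1 (congrFun₂ hsum i j)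

end CentralProducts

section Interleave

/-- The interleaved product `a 0 * b 0 * a 1 * b 1 * ⋯ * b (m - 1) * a m`, of which the double
alternating sums below are made up. -/
def interleave {S : Type*} [Monoid S] {m : ℕ} (a : Fin (m + 1) → S) (b : Fin m → S) : S :=
  (List.ofFn fun t => a t.castSucc * b t).prod * a (Fin.last m)

theorem interleave_zero {S : Type*} [Monoid S] (a : Fin 1 → S) (b : Fin 0 → S) :
    interleave a b = a 0 := by
  simp [interleave]

theorem interleave_succ {S : Type*} [Monoid S] {m : ℕ} (a : Fin (m + 2) → S)
    (b : Fin (m + 1) → S) :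
    interleave a b = a 0 * b 0 * interleave (Fin.tail a) (Fin.tail b) := by
  simp only [interleave, List.ofFn_succ, List.prod_cons, mul_assoc]
  rfl

theorem sum_mul_sum_pow_mul_sum {S α β : Type*} [Semiring S] [Fintype α] [Fintype β]
    (x : α → S) (y : β → S) (m : ℕ) :
    ((∑ i, x i) * ∑ j, y j) ^ m * ∑ i, x i =
      ∑ a : Fin (m + 1) → α, ∑ b : Fin m → β, interleave (x ∘ a) (y ∘ b) := by
  induction m with
  | zero =>
    simp only [pow_zero, one_mul, interleave_zero, Function.comp_apply, Finset.univ_unique,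
      Finset.sum_singleton]
    exact ((Equiv.funUnique (Fin 1) α).sum_comp x).symm
  | succ m ih =>
    calc ((∑ i, x i) * ∑ j, y j) ^ (m + 1) * ∑ i, x i
        = (∑ i, x i) * (∑ j, y j) *
            ∑ a : Fin (m + 1) → α, ∑ b : Fin m → β, interleave (x ∘ a) (y ∘ b) := by
          rw [← ih, pow_succ', mul_assoc]
      _ = ∑ i, ∑ a : Fin (m + 1) → α, ∑ j, ∑ b : Fin m → β,
            x i * y j * interleave (x ∘ a) (y ∘ b) := by
          simp only [← Finset.mul_sum, ← Finset.sum_mul]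
      _ = ∑ a : Fin (m + 2) → α, ∑ b : Fin (m + 1) → β, interleave (x ∘ a) (y ∘ b) := by
          simp only [← (Fin.consEquiv fun _ => α).sum_comp, ← (Fin.consEquiv fun _ => β).sum_comp,
            Fintype.sum_prod_type, interleave_succ]
          rfl

variable {K E ι : Type*} [CommSemiring K] [Semiring E] [Algebra K E] [Fintype ι] [DecidableEq ι]

theorem smul_mapMatrix_mul_smul_mapMatrix (x y : E) (C D : Matrix ι ι K) :
    (x • (algebraMap K E).mapMatrix C) * (y • (algebraMap K E).mapMatrix D) =
      (x * y) • (algebraMap K E).mapMatrix (C * D) := by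
  ext i j
  simp only [mul_apply, Matrix.smul_apply, RingHom.mapMatrix_apply, map_apply, smul_eq_mul,
    map_mul, Finset.mul_sum]
  refine Finset.sum_congr rfl fun k _ => ?_
  rw [mul_assoc, ← mul_assoc (algebraMap K E _), Algebra.commutes, mul_assoc, mul_assoc]

theorem interleave_smul_mapMatrix {m : ℕ} (x : Fin (m + 1) → E) (y : Fin m → E)
    (A : Fin (m + 1) → Matrix ι ι K) (B : Fin m → Matrix ι ι K) :
    interleave (fun i => x i • (algebraMap K E).mapMatrix (A i))
        (fun j => y j • (algebraMap K E).mapMatrix (B j)) =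
      interleave x y • (algebraMap K E).mapMatrix (interleave A B) := by
  induction m with
  | zero => simp only [interleave_zero]
  | succ m ih =>
    rw [interleave_succ, interleave_succ x, interleave_succ A, smul_mapMatrix_mul_smul_mapMatrix]
    exact (congrArg (_ * ·) (ih (Fin.tail x) (Fin.tail y) (Fin.tail A) (Fin.tail B))).trans
      (smul_mapMatrix_mul_smul_mapMatrix _ _ _ _)

end Interleave

section ExteriorAlgebra

open ExteriorAlgebra

variable {K V : Type*} [CommRing K] [AddCommGroup V] [Module K V]

theorem ι_mul_ι_eq_neg (v w : V) : ι K v * ι K w = -(ι K w * ι K v) :=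
  eq_neg_of_add_eq_zero_left (ι_add_mul_swap v w)

theorem ι_mul_ι_mem_center (v w : V) : ι K v * ι K w ∈ Subring.center (ExteriorAlgebra K V) := by
  rw [Subring.mem_center_iff]
  intro x
  induction x using ExteriorAlgebra.induction with
  | algebraMap r => exact Algebra.commutes r _
  | ι u =>
    rw [← mul_assoc, ι_mul_ι_eq_neg u v, neg_mul, mul_assoc, ι_mul_ι_eq_neg u w, mul_neg, neg_neg,
      mul_assoc]
  | mul a b ha hb => rw [mul_assoc, hb, ← mul_assoc, ha, mul_assoc]
  | add a b ha hb => rw [add_mul, mul_add, ha, hb]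

theorem ι_mul_ιMulti (v : V) {k : ℕ} (u : Fin k → V) :
    ι K v * ιMulti K k u = (-1 : ℤˣ) ^ k • (ιMulti K k u * ι K v) := by
  induction k with
  | zero => simp
  | succ k ih =>
    rw [ιMulti_succ_apply, ← mul_assoc, ι_mul_ι_eq_neg, neg_mul, mul_assoc, ih, pow_succ,
      mul_smul_comm, mul_assoc, mul_neg_one, Units.neg_smul]

theorem interleave_ι {m : ℕ} (u : Fin (m + 1) → V) (v : Fin m → V) :
    interleave (ι K ∘ u) (ι K ∘ v) =
      (-1 : ℤˣ) ^ (m + 1).choose 2 • (ιMulti K (m + 1) u * ιMulti K m v) := by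
  induction m with
  | zero => simp [interleave_zero, ιMulti_succ_apply]
  | succ m ih =>
    have hchoose : (m + 2).choose 2 = (m + 1).choose 2 + (m + 1) := by
      rw [Nat.choose_succ_succ' (m + 1) 1, Nat.choose_one_right, add_comm]
    calc interleave (ι K ∘ u) (ι K ∘ v)
        = ι K (u 0) * ι K (v 0) * interleave (ι K ∘ vecTail u) (ι K ∘ vecTail v) :=
          interleave_succ _ _
      _ = (-1 : ℤˣ) ^ (m + 1).choose 2 • (ι K (u 0) * (ι K (v 0) * ιMulti K (m + 1) (vecTail u)) *
            ιMulti K m (vecTail v)) := by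
          rw [ih, mul_smul_comm]
          simp only [mul_assoc]
      _ = (-1 : ℤˣ) ^ (m + 2).choose 2 • (ιMulti K (m + 2) u * ιMulti K (m + 1) v) := by
          rw [ι_mul_ιMulti, mul_smul_comm, smul_mul_assoc, smul_smul, ← pow_add,
            ← hchoose, ιMulti_succ_apply u, ιMulti_succ_apply v]
          simp only [mul_assoc]

theorem smul_ιMulti_basis_eq_zero_iff {n : ℕ} (b : Module.Basis (Fin n) K V) {c : K} :
    c • ιMulti K n b = 0 ↔ c = 0 := by
  refine ⟨fun h => ?_, fun h => by rw [h, zero_smul]⟩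
  have hdet := congrArg (liftAlternating (Function.update 0 n b.det)) h
  rwa [map_smul, map_zero, liftAlternating_apply_ιMulti, Function.update_self,
    Module.Basis.det_self, smul_eq_mul, mul_one] at hdet

theorem isAddTorsionFree_exteriorAlgebra [IsAddTorsionFree K] {I : Type*} [LinearOrder I]
    (b : Module.Basis I K V) : IsAddTorsionFree (ExteriorAlgebra K V) :=
  Function.Injective.isAddTorsionFree b.ExteriorAlgebra.repr.toLinearMap.toAddMonoidHom
    b.ExteriorAlgebra.repr.injective

end ExteriorAlgebra

theorem sum_alternatingMap_comp_smul {K V E P ι : Type*} [Ring K] [AddCommGroup V] [Module K V]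
    [Ring E] [Module K E] [AddCommGroup P] [Module E P] [Fintype ι] [DecidableEq ι]
    (g : V [⋀^ι]→ₗ[K] E) (e : ι → V) (D : (ι → ι) → P) :
    ∑ a : ι → ι, g (e ∘ a) • D a =
      g e • ∑ σ : Equiv.Perm ι, Equiv.Perm.sign σ • D σ := by
  rw [Finset.smul_sum]
  symm
  refine Fintype.sum_of_injective (fun σ : Equiv.Perm ι => (σ : ι → ι))
    DFunLike.coe_injective _ _ (fun a ha => ?_) (fun σ => ?_)
  · rw [g.map_eq_zero_of_not_injective, zero_smul]
    intro h
    exact ha ⟨Equiv.ofBijective a (Finite.injective_iff_bijective.1 h.of_comp), rfl⟩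
  · rw [g.map_perm, smul_assoc, smul_comm]

section GrassmannMatrix

open ExteriorAlgebra

variable {K V n α β : Type*} [CommRing K] [AddCommGroup V] [Module K V] [Fintype α]

/-- The combination `∑ i, v i • A i` of the matrices `A i`, with the vectors `v i` as
anticommuting coefficients in the exterior algebra. -/
def grassmannMatrix (v : α → V) (A : α → Matrix n n K) : Matrix n n (ExteriorAlgebra K V) :=
  of fun k l => ι K (∑ i, A i k l • v i)

theorem grassmannMatrix_transpose (v : α → V) (A : α → Matrix n n K) :
    (grassmannMatrix v A)ᵀ = grassmannMatrix v fun i => (A i)ᵀ := rfl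

theorem grassmannMatrix_neg (v : α → V) (A : α → Matrix n n K) :
    (grassmannMatrix v fun i => -A i) = -grassmannMatrix v A := by
  ext
  simp [grassmannMatrix]

variable [Fintype β] [Fintype n] [DecidableEq n]

theorem grassmannMatrix_eq_sum (v : α → V) (A : α → Matrix n n K) :
    grassmannMatrix v A =
      ∑ i, ι K (v i) • (algebraMap K (ExteriorAlgebra K V)).mapMatrix (A i) := by
  ext k l
  simp only [grassmannMatrix, of_apply, map_sum, map_smul, Matrix.sum_apply, Matrix.smul_apply,
    RingHom.mapMatrix_apply, map_apply, smul_eq_mul, ← Algebra.commutes, ← Algebra.smul_def]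

theorem pow_mul_grassmannMatrix_eq_zero [IsAddTorsionFree (ExteriorAlgebra K V)]
    {A : α → Matrix n n K} (hA : ∀ i, (A i)ᵀ = -A i) {B : β → Matrix n n K}
    (hB : ∀ j, (B j)ᵀ = B j) (e : α → V) (f : β → V) {k : ℕ} (hk : Fintype.card n ≤ k + 1) :
    (grassmannMatrix e A * grassmannMatrix f B) ^ k * grassmannMatrix e A = 0 := by
  obtain ⟨r, rfl⟩ := Nat.exists_eq_add_of_le' (Nat.sub_le_iff_le_add.2 hk)
  have hAt : (grassmannMatrix e A)ᵀ = -grassmannMatrix e A := by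
    simp only [grassmannMatrix_transpose, hA, grassmannMatrix_neg]
  have hBt : (grassmannMatrix f B)ᵀ = grassmannMatrix f B := by
    simp only [grassmannMatrix_transpose, hB]
  have hzero := pow_card_sub_one_mul_eq_zero_of_anticommute hAt hBt
    (fun _ _ _ _ => ι_mul_ι_eq_neg _ _) fun _ _ => sum_mem fun _ _ => ι_mul_ι_mem_center _ _
  rw [pow_add, mul_assoc, hzero, mul_zero]

theorem pow_mul_grassmannMatrix_eq_smul {m : ℕ} (e : Fin (m + 1) → V) (f : Fin m → V)
    (A : Fin (m + 1) → Matrix n n K) (B : Fin m → Matrix n n K) :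
    (grassmannMatrix e A * grassmannMatrix f B) ^ m * grassmannMatrix e A =
      ((-1 : ℤˣ) ^ (m + 1).choose 2 • (ιMulti K (m + 1) e * ιMulti K m f)) •
        (algebraMap K (ExteriorAlgebra K V)).mapMatrix
          (∑ σ : Equiv.Perm (Fin (m + 1)), ∑ τ : Equiv.Perm (Fin m),
            (Equiv.Perm.sign σ * Equiv.Perm.sign τ) • interleave (A ∘ σ) (B ∘ τ)) := by
  let φ := (algebraMap K (ExteriorAlgebra K V)).mapMatrix (m := n)
  calc (grassmannMatrix e A * grassmannMatrix f B) ^ m * grassmannMatrix e A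
      = ∑ a : Fin (m + 1) → Fin (m + 1), ∑ b : Fin m → Fin m,
          interleave (ι K ∘ e ∘ a) (ι K ∘ f ∘ b) • φ (interleave (A ∘ a) (B ∘ b)) := by
        rw [grassmannMatrix_eq_sum, grassmannMatrix_eq_sum, sum_mul_sum_pow_mul_sum]
        exact Finset.sum_congr rfl fun a _ => Finset.sum_congr rfl fun b _ =>
          interleave_smul_mapMatrix _ _ _ _
    _ = (-1 : ℤˣ) ^ (m + 1).choose 2 • ∑ a : Fin (m + 1) → Fin (m + 1), ιMulti K (m + 1) (e ∘ a) •
          ∑ b : Fin m → Fin m, ιMulti K m (f ∘ b) • φ (interleave (A ∘ a) (B ∘ b)) := by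
        simp only [interleave_ι, Finset.smul_sum, smul_assoc, mul_smul]
    _ = _ := by
        simp only [sum_alternatingMap_comp_smul, smul_comm _ (ιMulti K m f), ← Finset.smul_sum]
        rw [smul_assoc, mul_smul]
        simp only [map_sum, Finset.smul_sum, mul_smul, Units.smul_def, map_zsmul, φ]

end GrassmannMatrix

theorem alt_sym_amitsur_levitzki_type_general {K ι : Type*} [CommRing K] [IsAddTorsionFree K]
    [Fintype ι] [DecidableEq ι] {m : ℕ} (hι : Fintype.card ι ≤ m + 1)
    (A : Fin (m + 1) → Matrix ι ι K) (hA : ∀ i, (A i)ᵀ = -A i)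
    (B : Fin m → Matrix ι ι K) (hB : ∀ j, (B j)ᵀ = B j) :
    ∑ σ : Equiv.Perm (Fin (m + 1)), ∑ τ : Equiv.Perm (Fin m),
      (Equiv.Perm.sign σ * Equiv.Perm.sign τ) • interleave (A ∘ σ) (B ∘ τ) = 0 := by
  let b := Pi.basisFun K (Fin (m + 1 + m))
  let e (i : Fin (m + 1)) := b (Fin.castAdd m i)
  let f (j : Fin m) := b (Fin.natAdd (m + 1) j)
  have := isAddTorsionFree_exteriorAlgebra b
  have hzero : (grassmannMatrix e A * grassmannMatrix f B) ^ m * grassmannMatrix e A = 0 :=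
    pow_mul_grassmannMatrix_eq_zero hA hB e f hι
  rw [pow_mul_grassmannMatrix_eq_smul, ExteriorAlgebra.ιMulti_mul_ιMulti, Fin.append_castAdd_natAdd,
    smul_assoc, smul_eq_zero_iff_eq] at hzero
  ext1 k l
  refine (smul_ιMulti_basis_eq_zero_iff b).1 ?_
  rw [Algebra.smul_def, Algebra.commutes]
  exact congrFun₂ hzero k l

theorem alt_sym_amitsur_levitzki_type (n : ℕ) (hn : 0 < n)
    (A : Fin n → Matrix (Fin n) (Fin n) ℂ) (hA : ∀ i, (A i)ᵀ = -A i)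
    (B : Fin (n - 1) → Matrix (Fin n) (Fin n) ℂ) (hB : ∀ j, (B j)ᵀ = B j) :
    ∑ σ : Equiv.Perm (Fin n), ∑ τ : Equiv.Perm (Fin (n - 1)),
      ((Equiv.Perm.sign σ * Equiv.Perm.sign τ : ℤˣ) : ℤ) •
        ((List.ofFn fun t : Fin (n - 1) =>
            A (σ (t.castLE (by omega))) * B (τ t)).prod *
          A (σ ⟨n - 1, by omega⟩))
    = 0 := by
  obtain ⟨m, rfl⟩ := Nat.exists_eq_add_one_of_ne_zero hn.ne'
  exact alt_sym_amitsur_levitzki_type_general (Fintype.card_fin _).le A hA B hB
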